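/- Let q be a prime power and x = (x_1,…,x_n) arbitrary weights. Then for every h ∈ B⁻ (an invertible lower triangular matrix) and every coset gB ∈ G/B, one has h·( gB · T_{G/B}(q,x) ) = ( (hg)B ) · T_{G/B}(q,x) in ℂ[G/B], where h acts on ℂ[G/B] by left multiplication on cosets (g'B ↦ (hg')B, extended linearly). -/

import Mathlib

open scoped Classical
set_option linter.unusedSectionVars false
set_option synthInstance.maxHeartbeats 1000000
set_option maxHeartbeats 1000000

noncomputable section

namespace QTsetlin

/-- `M` is upper triangular. -/
def upperTri {F : Type} [Field F] {n : ℕ} (M : Matrix (Fin n) (Fin n) F) : Prop :=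
  ∀ i j : Fin n, j < i → M i j = 0

/-- `M` is lower triangular. -/
def lowerTri {F : Type} [Field F] {n : ℕ} (M : Matrix (Fin n) (Fin n) F) : Prop :=
  ∀ i j : Fin n, i < j → M i j = 0

variable (F : Type) [Field F] [Fintype F] [DecidableEq F] (n : ℕ)

/-- The general linear group `G = GL_n(F_q)`. -/
abbrev GLn := GL (Fin n) F

/-- The Borel subgroup `B` of invertible upper triangular matrices. -/
def Bsub : Subgroup (GLn F n) where
  carrier := {g | upperTri (g : Matrix (Fin n) (Fin n) F)}
  one_mem' := by
    intro i j hij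
    simp [Matrix.one_apply, (Fin.ne_of_lt hij).symm]
  mul_mem' := by
    intro a b ha hb i j hij
    exact Matrix.BlockTriangular.mul ha hb hij
  inv_mem' := by
    intro a ha
    have hdet : IsUnit ((a : Matrix (Fin n) (Fin n) F).det) :=
      (Matrix.isUnit_iff_isUnit_det _).mp a.isUnit
    have hinv : Invertible (a : Matrix (Fin n) (Fin n) F) :=
      Matrix.invertibleOfIsUnitDet _ hdet
    have h2 : ((a : Matrix (Fin n) (Fin n) F)⁻¹).BlockTriangular (id : Fin n → Fin n) :=
      Matrix.blockTriangular_inv_of_blockTriangular ha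
    show upperTri ((a⁻¹ : GLn F n) : Matrix (Fin n) (Fin n) F)
    rw [show ((a⁻¹ : GLn F n) : Matrix (Fin n) (Fin n) F)
        = (a : Matrix (Fin n) (Fin n) F)⁻¹ from Matrix.coe_units_inv a]
    exact h2

/-- The set of cosets `G/B`. -/
abbrev Cosets := GLn F n ⧸ Bsub F n

/-- permutation matrix of `π`: entry 1 in positions `(π j, j)`. -/
def permMat (π : Equiv.Perm (Fin n)) : Matrix (Fin n) (Fin n) F :=
  fun i j => if π j = i then 1 else 0

lemma permMat_mul (π σ : Equiv.Perm (Fin n)) :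
    permMat F n π * permMat F n σ = permMat F n (π * σ) := by
  ext i j
  rw [Matrix.mul_apply]
  simp only [permMat, mul_ite, ite_mul, one_mul, mul_one, mul_zero, zero_mul]
  rw [Finset.sum_eq_single (σ j)]
  · by_cases hi : π (σ j) = i <;> simp [Equiv.Perm.mul_apply, hi]
  · intro k _ hk
    simp [hk.symm]
  · simp

lemma permMat_one : permMat F n 1 = 1 := by
  ext i j
  simp [permMat, Matrix.one_apply, eq_comm]

/-- The permutation matrix of `π`, as an element of `GL_n(F)`. -/
def permGL (π : Equiv.Perm (Fin n)) : GLn F n :=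
  ⟨permMat F n π, permMat F n π⁻¹,
    by rw [permMat_mul, mul_inv_cancel, permMat_one],
    by rw [permMat_mul, inv_mul_cancel, permMat_one]⟩

/-- `f_i(t)`: identity matrix with an extra entry `t` in position `(r, c)`, as an
element of `GL_n(F)`. -/
def transvGL (r c : Fin n) (h : r ≠ c) (t : F) : GLn F n :=
  ⟨Matrix.transvection r c t, Matrix.transvection r c (-t),
    by rw [Matrix.transvection_mul_transvection_same _ _ h, add_neg_cancel,
      Matrix.transvection_zero],
    by rw [Matrix.transvection_mul_transvection_same _ _ h, neg_add_cancel,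
      Matrix.transvection_zero]⟩

variable (K : Type) [Field K]

/-- Matrix (row convention: row `gB` is `(gB) · T_{k+1}`) of the Hecke generator `T_{k+1}`
(paper indexing) on `ℂ[G/B]`:
`(gB)·T_i = g s_i B + ∑_{t ≠ 0} g f_i(t) B`, where `s_i` swaps (0-based) positions `k, k+1`
and `f_i(t)` has an extra entry `t` in (0-based) position `(k+1, k)`. -/
def genGB (k : ℕ) : Matrix (Cosets F n) (Cosets F n) K := fun C D =>
  if h : k + 1 < n then
    (if (QuotientGroup.mk (C.out * permGL F n
          (Equiv.swap ⟨k, Nat.lt_of_succ_lt h⟩ ⟨k + 1, h⟩)) : Cosets F n) = D then 1 else 0)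
    + ((Finset.univ.filter fun t : F => t ≠ 0 ∧
        (QuotientGroup.mk (C.out * transvGL F n ⟨k + 1, h⟩ ⟨k, Nat.lt_of_succ_lt h⟩
          (fun hc => by simp [Fin.ext_iff] at hc) t) : Cosets F n) = D).card : K)
  else 0

/-- Matrix of the product `T_k T_{k-1} ⋯ T_1` (paper indexing) on `ℂ[G/B]`. -/
def prodGenGB : ℕ → Matrix (Cosets F n) (Cosets F n) K
  | 0 => 1
  | k + 1 => genGB F n K k * prodGenGB k

/-- The (0-based) row index of the leading entry (the pivot `1` of the distinguished coset
representative) in the first column of a representative of the coset `C`. -/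
def pivotRow (C : Cosets F n) : ℕ :=
  sInf {i : ℕ | ∃ h : i < n,
    ((C.out : GLn F n) : Matrix (Fin n) (Fin n) F) ⟨i, h⟩
      ⟨0, Nat.lt_of_le_of_lt (Nat.zero_le i) h⟩ ≠ 0}

/-- Matrix of the weighting operator `X_{G/B}(q,x)`, where `q` is the cardinality of the
field: `gB ↦ (x_i / q^{n-i}) gB` with `i` the row index of the leading 1 in the first
column of the distinguished representative of `gB`. -/
def XGB (x : Fin n → K) : Matrix (Cosets F n) (Cosets F n) K := fun C D =>
  if D = C then
    (if h : pivotRow F n C < n then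
      x ⟨pivotRow F n C, h⟩ / (Fintype.card F : K) ^ (n - 1 - pivotRow F n C)
    else 0)
  else 0

/-- Matrix of the q-Tsetlin library operator
`T_{G/B}(q,x) = (∑_{i=1}^n T_{i-1} ⋯ T_1) ∘ X_{G/B}(q,x)` on `ℂ[G/B]` (row convention). -/
def TGB (x : Fin n → K) : Matrix (Cosets F n) (Cosets F n) K :=
  (∑ k ∈ Finset.range n, prodGenGB F n K k) * XGB F n K x

/-- The coset `gB` belongs to the double coset `[π] = B⁻ π B`. -/
def inDC (π : Equiv.Perm (Fin n)) (C : Cosets F n) : Prop :=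
  ∃ l b : GLn F n, lowerTri (l : Matrix (Fin n) (Fin n) F) ∧
    upperTri (b : Matrix (Fin n) (Fin n) F) ∧
    C = QuotientGroup.mk (l * permGL F n π * b)

/-- Block map collapsing `k` and `k+1`. -/
def colMap (n k : ℕ) (i : Fin n) : ℕ := if (i : ℕ) ≤ k then i else i - 1

lemma upper_par (F : Type) [Field F] {n : ℕ} (k : ℕ) {M : Matrix (Fin n) (Fin n) F}
    (hM : upperTri M) : M.BlockTriangular (colMap n k) := by
  intro i j hij
  apply hM
  unfold colMap at hij
  rw [Fin.lt_def]
  split_ifs at hij <;> omega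

lemma mem_Bsub (F : Type) [Field F] [Fintype F] [DecidableEq F] (n : ℕ) (g : GLn F n) :
    g ∈ Bsub F n ↔ upperTri (g : Matrix (Fin n) (Fin n) F) := Iff.rfl

lemma diag_ne (F : Type) [Field F] {n : ℕ} (g : GLn F n)
    (hg : upperTri (g : Matrix (Fin n) (Fin n) F)) (i : Fin n) :
    (g : Matrix (Fin n) (Fin n) F) i i ≠ 0 := by
  have hdet : IsUnit ((g : Matrix (Fin n) (Fin n) F).det) :=
    (Matrix.isUnit_iff_isUnit_det _).mp g.isUnit
  rw [Matrix.det_of_upperTriangular (fun i j hij => hg i j hij)] at hdet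
  exact Finset.prod_ne_zero_iff.mp hdet.ne_zero i (Finset.mem_univ i)

lemma diag_ne_lower (F : Type) [Field F] {n : ℕ} (g : GLn F n)
    (hg : lowerTri (g : Matrix (Fin n) (Fin n) F)) (i : Fin n) :
    (g : Matrix (Fin n) (Fin n) F) i i ≠ 0 := by
  have hdet : IsUnit ((g : Matrix (Fin n) (Fin n) F).det) :=
    (Matrix.isUnit_iff_isUnit_det _).mp g.isUnit
  rw [Matrix.det_of_lowerTriangular _ (fun i j hij => hg i j hij)] at hdet
  exact Finset.prod_ne_zero_iff.mp hdet.ne_zero i (Finset.mem_univ i)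

lemma mk_eq_iff (F : Type) [Field F] [Fintype F] [DecidableEq F] (n : ℕ) (g s : GLn F n)
    (D : Cosets F n) :
    (QuotientGroup.mk (g * s) : Cosets F n) = D ↔
      upperTri ((s⁻¹ * (g⁻¹ * D.out) : GLn F n) : Matrix (Fin n) (Fin n) F) := by
  conv_lhs => rw [← QuotientGroup.out_eq' D]
  rw [QuotientGroup.eq, mem_Bsub, mul_inv_rev, mul_assoc]

lemma swap_upper_iff (F : Type) [Field F] [Fintype F] [DecidableEq F] (n k : ℕ) (h : k + 1 < n) (m : GLn F n) :
    upperTri (((permGL F n (Equiv.swap ⟨k, Nat.lt_of_succ_lt h⟩ ⟨k + 1, h⟩))⁻¹ * m : GLn F n) :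
      Matrix (Fin n) (Fin n) F) ↔
    (m : Matrix (Fin n) (Fin n) F).BlockTriangular (colMap n k) ∧
      m ⟨k, Nat.lt_of_succ_lt h⟩ ⟨k, Nat.lt_of_succ_lt h⟩ = 0 := by
  have key : ∀ i j, (((permGL F n (Equiv.swap ⟨k, Nat.lt_of_succ_lt h⟩ ⟨k + 1, h⟩))⁻¹ * m :
      GLn F n) : Matrix (Fin n) (Fin n) F) i j =
      m (Equiv.swap ⟨k, Nat.lt_of_succ_lt h⟩ ⟨k + 1, h⟩ i) j := by
    intro i j
    change (permMat F n (Equiv.swap _ _)⁻¹ * (m : Matrix (Fin n) (Fin n) F)) i j = _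
    rw [Matrix.mul_apply]
    rw [Finset.sum_eq_single (Equiv.swap ⟨k, Nat.lt_of_succ_lt h⟩ ⟨k + 1, h⟩ i)]
    · simp [permMat]
    · intro b _ hb
      have : ¬ (Equiv.swap (⟨k, Nat.lt_of_succ_lt h⟩ : Fin n) ⟨k + 1, h⟩ b = i) := by
        intro hc
        apply hb
        rw [← hc, Equiv.swap_apply_self]
      simp [permMat, this]
    · simp
  unfold upperTri
  simp only [key]
  constructor
  · intro H
    constructor
    · intro i j hij
      have h1 := H (Equiv.swap ⟨k, Nat.lt_of_succ_lt h⟩ ⟨k + 1, h⟩ i) j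
      rw [Equiv.swap_apply_self] at h1
      apply h1
      unfold colMap at hij
      rw [Equiv.swap_apply_def, Fin.lt_def]
      simp only [Fin.ext_iff]
      split_ifs at hij ⊢ <;> (try simp only []) <;> omega
    · have h1 := H ⟨k + 1, h⟩ ⟨k, Nat.lt_of_succ_lt h⟩ (by simp [Fin.lt_def])
      simpa using h1
  · rintro ⟨H, H0⟩ i j hij
    by_cases hc : i = ⟨k + 1, h⟩ ∧ j = ⟨k, Nat.lt_of_succ_lt h⟩
    · obtain ⟨rfl, rfl⟩ := hc
      simpa using H0
    · apply H
      rw [Fin.lt_def] at hij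
      unfold colMap
      rw [Equiv.swap_apply_def]
      simp only [Fin.ext_iff] at hc ⊢
      split_ifs <;> (try simp only [] at *) <;> omega

lemma transv_upper_iff (F : Type) [Field F] [Fintype F] [DecidableEq F] (n k : ℕ) (h : k + 1 < n) (m : GLn F n)
    (hne : (⟨k + 1, h⟩ : Fin n) ≠ ⟨k, Nat.lt_of_succ_lt h⟩) (t : F) :
    upperTri (((transvGL F n ⟨k + 1, h⟩ ⟨k, Nat.lt_of_succ_lt h⟩ hne t)⁻¹ * m : GLn F n) :
      Matrix (Fin n) (Fin n) F) ↔
    (m : Matrix (Fin n) (Fin n) F).BlockTriangular (colMap n k) ∧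
      m ⟨k + 1, h⟩ ⟨k, Nat.lt_of_succ_lt h⟩ =
        t * m ⟨k, Nat.lt_of_succ_lt h⟩ ⟨k, Nat.lt_of_succ_lt h⟩ := by
  have key1 : ∀ j, (((transvGL F n ⟨k + 1, h⟩ ⟨k, Nat.lt_of_succ_lt h⟩ hne t)⁻¹ * m : GLn F n) :
      Matrix (Fin n) (Fin n) F) ⟨k + 1, h⟩ j =
      m ⟨k + 1, h⟩ j + -t * m ⟨k, Nat.lt_of_succ_lt h⟩ j := by
    intro j
    change (Matrix.transvection (⟨k + 1, h⟩ : Fin n) ⟨k, Nat.lt_of_succ_lt h⟩ (-t) * (m : Matrix (Fin n) (Fin n) F)) _ j = _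
    rw [Matrix.transvection_mul_apply_same]
  have key2 : ∀ i j, i ≠ ⟨k + 1, h⟩ →
      (((transvGL F n ⟨k + 1, h⟩ ⟨k, Nat.lt_of_succ_lt h⟩ hne t)⁻¹ * m : GLn F n) :
      Matrix (Fin n) (Fin n) F) i j = m i j := by
    intro i j hi
    change (Matrix.transvection (⟨k + 1, h⟩ : Fin n) ⟨k, Nat.lt_of_succ_lt h⟩ (-t) * (m : Matrix (Fin n) (Fin n) F)) i j = _
    rw [Matrix.transvection_mul_apply_of_ne _ _ _ _ hi]
  constructor
  · intro H
    have h1 : ∀ i j : Fin n, i ≠ ⟨k + 1, h⟩ → j < i → m i j = 0 := by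
      intro i j hi hj
      rw [← key2 i j hi]
      exact H i j hj
    constructor
    · intro i j hij
      by_cases hi : i = ⟨k + 1, h⟩
      · subst hi
        have hj : (j : ℕ) < k := by
          unfold colMap at hij
          split_ifs at hij <;> (try simp only [] at *) <;> omega
        have h2 := H ⟨k + 1, h⟩ j (by rw [Fin.lt_def]; simp only []; omega)
        rw [key1, h1 ⟨k, Nat.lt_of_succ_lt h⟩ j hne.symm hj] at h2
        simpa using h2
      · apply h1 i j hi
        unfold colMap at hij
        rw [Fin.lt_def]
        split_ifs at hij <;> omega
    · have h2 := H ⟨k + 1, h⟩ ⟨k, Nat.lt_of_succ_lt h⟩ (by simp [Fin.lt_def])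
      rw [key1] at h2
      linear_combination h2
  · rintro ⟨H, H0⟩ i j hij
    rw [Fin.lt_def] at hij
    by_cases hi : i = ⟨k + 1, h⟩
    · subst hi
      rw [key1]
      by_cases hj : j = ⟨k, Nat.lt_of_succ_lt h⟩
      · subst hj
        rw [H0]
        ring
      · have hj' : (j : ℕ) < k := by
          simp only [Fin.ext_iff] at hj hij
          omega
        rw [H (i := ⟨k + 1, h⟩) (j := j) (by unfold colMap; split_ifs <;> (try simp only [] at *) <;> omega),
          H (i := ⟨k, Nat.lt_of_succ_lt h⟩) (j := j)
            (by unfold colMap; split_ifs <;> (try simp only [] at *) <;> omega)]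
        ring
    · rw [key2 i j hi]
      apply H
      rw [Fin.ext_iff] at hi
      unfold colMap
      split_ifs <;> (try simp only [] at *) <;> omega

lemma genGB_eq (F : Type) [Field F] [Fintype F] [DecidableEq F] (n : ℕ) (K : Type) [Field K]
    (k : ℕ) (h : k + 1 < n) (C D : Cosets F n) :
    genGB F n K k C D =
      if ((C.out⁻¹ * D.out : GLn F n) : Matrix (Fin n) (Fin n) F).BlockTriangular (colMap n k) ∧
        ¬ (C.out⁻¹ * D.out : GLn F n) ∈ Bsub F n then 1 else 0 := by
  unfold genGB
  rw [dif_pos h]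
  simp only [mk_eq_iff, swap_upper_iff, transv_upper_iff]
  generalize hm : (C.out⁻¹ * D.out : GLn F n) = m
  have hB : (m : Matrix (Fin n) (Fin n) F).BlockTriangular (colMap n k) →
      (m ∈ Bsub F n ↔ m ⟨k + 1, h⟩ ⟨k, Nat.lt_of_succ_lt h⟩ = 0) := by
    intro hP
    constructor
    · intro hb
      exact hb _ _ (by simp [Fin.lt_def])
    · intro h0 i j hij
      by_cases hc : i = ⟨k + 1, h⟩ ∧ j = ⟨k, Nat.lt_of_succ_lt h⟩
      · obtain ⟨rfl, rfl⟩ := hc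
        exact h0
      · apply hP
        rw [Fin.lt_def] at hij
        simp only [Fin.ext_iff] at hc
        unfold colMap
        split_ifs <;> omega
  by_cases hP : (m : Matrix (Fin n) (Fin n) F).BlockTriangular (colMap n k)
  · simp only [hP, true_and, hB hP]
    by_cases h0 : m ⟨k, Nat.lt_of_succ_lt h⟩ ⟨k, Nat.lt_of_succ_lt h⟩ = 0
    · have h1 : m ⟨k + 1, h⟩ ⟨k, Nat.lt_of_succ_lt h⟩ ≠ 0 := by
        intro h1
        exact diag_ne F m ((hB hP).2 h1) _ h0
      simp [h0, h1]
    · by_cases h1 : m ⟨k + 1, h⟩ ⟨k, Nat.lt_of_succ_lt h⟩ = 0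
      · simp only [h0, h1, if_false, not_true_eq_false]
        rw [Finset.filter_false_of_mem]
        · simp
        · rintro t _ ⟨ht, hh⟩
          rcases mul_eq_zero.mp hh.symm with h2 | h2
          · exact ht h2
          · exact h0 h2
      · have : (Finset.univ.filter fun t : F => t ≠ 0 ∧
            m ⟨k + 1, h⟩ ⟨k, Nat.lt_of_succ_lt h⟩ =
              t * m ⟨k, Nat.lt_of_succ_lt h⟩ ⟨k, Nat.lt_of_succ_lt h⟩) =
            {m ⟨k + 1, h⟩ ⟨k, Nat.lt_of_succ_lt h⟩ /
              m ⟨k, Nat.lt_of_succ_lt h⟩ ⟨k, Nat.lt_of_succ_lt h⟩} := by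
          ext t
          simp only [Finset.mem_filter, Finset.mem_univ, true_and, Finset.mem_singleton]
          rw [eq_div_iff h0]
          constructor
          · rintro ⟨_, hh⟩
            exact hh.symm
          · intro hh
            refine ⟨?_, hh.symm⟩
            rintro rfl
            apply h1
            rw [← hh, zero_mul]
        rw [if_neg h0, if_pos h1]
        simp only [this]
        simp
  · simp [hP]

lemma smul_out (F : Type) [Field F] [Fintype F] [DecidableEq F] (n : ℕ) (h : GLn F n)
    (C : Cosets F n) : ∃ b ∈ Bsub F n, (h • C).out = h * C.out * b := by
  have : (QuotientGroup.mk (h * C.out) : Cosets F n) = h • C := by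
    conv_rhs => rw [← QuotientGroup.out_eq' C]
    rfl
  obtain ⟨b, hb⟩ := QuotientGroup.mk_out_eq_mul (Bsub F n) (h * C.out)
  refine ⟨b, b.2, ?_⟩
  rw [← this, hb]

lemma genGB_smul (F : Type) [Field F] [Fintype F] [DecidableEq F] (n : ℕ) (K : Type) [Field K]
    (k : ℕ) (h : GLn F n) (C D : Cosets F n) :
    genGB F n K k (h • C) (h • D) = genGB F n K k C D := by
  by_cases hk : k + 1 < n
  · rw [genGB_eq F n K k hk, genGB_eq F n K k hk]
    obtain ⟨b, hb, hC⟩ := smul_out F n h C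
    obtain ⟨b', hb', hD⟩ := smul_out F n h D
    have e : ((h • C).out⁻¹ * (h • D).out : GLn F n) = b⁻¹ * (C.out⁻¹ * D.out) * b' := by
      rw [hC, hD]
      group
    rw [e]
    generalize (C.out⁻¹ * D.out : GLn F n) = m
    have e1 : b⁻¹ * m * b' ∈ Bsub F n ↔ m ∈ Bsub F n := by
      rw [Subgroup.mul_mem_cancel_right _ hb',
        Subgroup.mul_mem_cancel_left _ ((Bsub F n).inv_mem hb)]
    have stab : ∀ (u v w : GLn F n), u ∈ Bsub F n → v ∈ Bsub F n →
        (w : Matrix (Fin n) (Fin n) F).BlockTriangular (colMap n k) →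
        ((u * w * v : GLn F n) : Matrix (Fin n) (Fin n) F).BlockTriangular (colMap n k) := by
      intro u v w hu hv hw
      rw [Units.val_mul, Units.val_mul]
      exact ((upper_par F k hu).mul hw).mul (upper_par F k hv)
    have e2 : ((b⁻¹ * m * b' : GLn F n) : Matrix (Fin n) (Fin n) F).BlockTriangular (colMap n k) ↔
        (m : Matrix (Fin n) (Fin n) F).BlockTriangular (colMap n k) := by
      constructor
      · intro hh
        have := stab b b'⁻¹ _ hb ((Bsub F n).inv_mem hb') hh
        rwa [show b * (b⁻¹ * m * b') * b'⁻¹ = m by group] at this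
      · exact stab b⁻¹ b' m ((Bsub F n).inv_mem hb) hb'
    simp only [e1, e2]
  · simp [genGB, hk]

lemma mul_smul_inv (F : Type) [Field F] [Fintype F] [DecidableEq F] (n : ℕ) (K : Type) [Field K]
    (h : GLn F n) (M N : Matrix (Cosets F n) (Cosets F n) K)
    (hM : ∀ C D, M (h • C) (h • D) = M C D) (hN : ∀ C D, N (h • C) (h • D) = N C D)
    (C D : Cosets F n) : (M * N) (h • C) (h • D) = (M * N) C D := by
  rw [Matrix.mul_apply, Matrix.mul_apply, ← Equiv.sum_comp (MulAction.toPerm h)]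
  simp only [MulAction.toPerm_apply, hM, hN]

lemma prodGenGB_smul (F : Type) [Field F] [Fintype F] [DecidableEq F] (n : ℕ) (K : Type) [Field K]
    (h : GLn F n) (k : ℕ) : ∀ C D : Cosets F n,
    prodGenGB F n K k (h • C) (h • D) = prodGenGB F n K k C D := by
  induction k with
  | zero =>
    intro C D
    simp [prodGenGB, Matrix.one_apply]
  | succ k ih => exact mul_smul_inv F n K h _ _ (genGB_smul F n K k h) ih

lemma lower_col (F : Type) [Field F] {n : ℕ} (h : GLn F n)
    (hlow : lowerTri (h : Matrix (Fin n) (Fin n) F)) (v : Fin n → F) (i : Fin n)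
    (hv : ∀ j < i, v j = 0) :
    ((h : Matrix (Fin n) (Fin n) F).mulVec v) i = (h : Matrix (Fin n) (Fin n) F) i i * v i := by
  rw [Matrix.mulVec, dotProduct, Finset.sum_eq_single i]
  · intro j _ hj
    rcases lt_or_gt_of_ne hj with hj | hj
    · rw [hv j hj, mul_zero]
    · rw [hlow i j hj, zero_mul]
  · simp

lemma lower_prefix (F : Type) [Field F] {n : ℕ} (h : GLn F n)
    (hlow : lowerTri (h : Matrix (Fin n) (Fin n) F)) (v : Fin n → F) (i : ℕ) :
    (∀ j : Fin n, (j : ℕ) < i → ((h : Matrix (Fin n) (Fin n) F).mulVec v) j = 0) ↔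
      (∀ j : Fin n, (j : ℕ) < i → v j = 0) := by
  constructor
  · intro H j
    induction j using WellFoundedLT.induction with
    | ind j ih =>
      intro hj
      have h1 := H j hj
      rw [lower_col F h hlow v j (fun l hl => ih l hl (lt_trans hl hj))] at h1
      exact (mul_eq_zero.mp h1).resolve_left (diag_ne_lower F h hlow j)
  · intro H j hj
    rw [lower_col F h hlow v j (fun l hl => H l (lt_trans hl hj)), H j hj, mul_zero]

lemma pivotRow_smul (F : Type) [Field F] [Fintype F] [DecidableEq F] (n : ℕ) (h : GLn F n)
    (hlow : lowerTri (h : Matrix (Fin n) (Fin n) F)) (C : Cosets F n) :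
    pivotRow F n (h • C) = pivotRow F n C := by
  rcases Nat.eq_zero_or_pos n with hn | hn
  · subst hn
    simp [pivotRow]
  set z : Fin n := ⟨0, hn⟩ with hz
  obtain ⟨b, hb, hC⟩ := smul_out F n h C
  have hb0 := diag_ne F b hb z
  have col : ∀ i, ((h • C).out : GLn F n) i z =
      ((h : Matrix (Fin n) (Fin n) F).mulVec (fun l => (C.out : GLn F n) l z)) i * b z z := by
    intro i
    rw [hC, Units.val_mul, Units.val_mul, Matrix.mul_apply, Finset.sum_eq_single z]
    · rfl
    · intro j _ hj
      rw [hb j z, mul_zero]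
      rw [Fin.lt_def]
      rw [hz, Ne, Fin.ext_iff] at hj
      simp only [hz] at *
      omega
    · simp
  -- abstract statement on vanishing prefixes
  have gen : ∀ (v w : Fin n → F), (∀ i : ℕ, (∀ j : Fin n, (j : ℕ) < i → v j = 0) ↔
      (∀ j : Fin n, (j : ℕ) < i → w j = 0)) →
      (sInf {i : ℕ | ∃ h : i < n, v ⟨i, h⟩ ≠ 0}) = sInf {i : ℕ | ∃ h : i < n, w ⟨i, h⟩ ≠ 0} := by
    have aux : ∀ (v w : Fin n → F), (∀ i : ℕ, (∀ j : Fin n, (j : ℕ) < i → v j = 0) ↔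
      (∀ j : Fin n, (j : ℕ) < i → w j = 0)) → ∀ i (hi : i < n), v ⟨i, hi⟩ ≠ 0 →
        ∃ j, j ≤ i ∧ ∃ hj : j < n, w ⟨j, hj⟩ ≠ 0 := by
      intro v w H i hi hv
      by_contra hcon
      push Not at hcon
      exact hv ((H (i + 1)).2 (fun j hj => hcon j (by omega) j.2) ⟨i, hi⟩ (by simp))
    intro v w H
    have le : ∀ (v w : Fin n → F), (∀ i : ℕ, (∀ j : Fin n, (j : ℕ) < i → v j = 0) ↔
      (∀ j : Fin n, (j : ℕ) < i → w j = 0)) →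
      (sInf {i : ℕ | ∃ h : i < n, v ⟨i, h⟩ ≠ 0}) ≤ sInf {i : ℕ | ∃ h : i < n, w ⟨i, h⟩ ≠ 0} := by
      intro v w H
      rcases Set.eq_empty_or_nonempty {i : ℕ | ∃ h : i < n, w ⟨i, h⟩ ≠ 0} with he | he
      · rcases Set.eq_empty_or_nonempty {i : ℕ | ∃ h : i < n, v ⟨i, h⟩ ≠ 0} with he' | he'
        · rw [he, he']
        · obtain ⟨i, hi, hv⟩ := he'
          obtain ⟨j, _, hj⟩ := aux v w H i hi hv
          exact absurd (show j ∈ {i : ℕ | ∃ h : i < n, w ⟨i, h⟩ ≠ 0} from hj) (by rw [he]; simp)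
      · obtain ⟨hi, hw⟩ := Nat.sInf_mem he
        obtain ⟨j, hji, hj⟩ := aux w v (fun i => (H i).symm) _ hi hw
        exact (Nat.sInf_le (show j ∈ {i : ℕ | ∃ h : i < n, v ⟨i, h⟩ ≠ 0} from hj)).trans hji
    exact le_antisymm (le v w H) (le w v (fun i => (H i).symm))
  apply gen (fun i => ((h • C).out : GLn F n) i z) (fun i => (C.out : GLn F n) i z)
  intro i
  rw [← lower_prefix F h hlow (fun i => (C.out : GLn F n) i z)]
  simp only [col, mul_eq_zero, hb0, or_false]

lemma XGB_smul (F : Type) [Field F] [Fintype F] [DecidableEq F] (n : ℕ) (K : Type) [Field K]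
    (x : Fin n → K) (h : GLn F n)
    (hlow : lowerTri (h : Matrix (Fin n) (Fin n) F)) (C D : Cosets F n) :
    XGB F n K x (h • C) (h • D) = XGB F n K x C D := by
  unfold XGB
  simp only [pivotRow_smul F n h hlow, smul_left_cancel_iff]

/-- Let `q` be a prime power (the cardinality of the finite field `F`)
and `x` arbitrary complex weights.  Left multiplication by a lower triangular `h ∈ B⁻`
commutes with the q-Tsetlin library operator on `ℂ[G/B]`: for every `h ∈ B⁻` and cosets
`gB`, the element `h · (gB · T_{G/B}(q,x))` equals `((hg)B) · T_{G/B}(q,x)`.  In matrix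
form (with `h • C` the left-multiplication action `g'B ↦ (hg')B` on cosets) this says that
the coefficient of `h • D` in `((hg)B) · T_{G/B}(q,x)` equals the coefficient of `D` in
`(gB) · T_{G/B}(q,x)`, for all cosets `D`. -/
theorem lower_triangular_commutes_with_TGB (F : Type) [Field F] [Fintype F]
    [DecidableEq F] (n : ℕ) (x : Fin n → ℂ) (h : GLn F n)
    (hlow : lowerTri (h : Matrix (Fin n) (Fin n) F)) (C D : Cosets F n) :
    TGB F n ℂ x (h • C) (h • D) = TGB F n ℂ x C D := by
  unfold TGB
  apply mul_smul_inv
  · intro C D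
    rw [Matrix.sum_apply, Matrix.sum_apply]
    exact Finset.sum_congr rfl (fun k _ => prodGenGB_smul F n ℂ h k C D)
  · exact XGB_smul F n ℂ x h hlow

end QTsetlin
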